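/- arXiv:1911.12283 — 3 statements merged into one kernel-verified Lean document; each statement's English description precedes it below -/
import Mathlib

section
/- Let F be a field of characteristic different from 2 and let (V, Q) be a 2-dimensional F-vector space with a nondegenerate quadratic form Q. Let d ∈ F^× be the determinant of the Gram matrix of the associated bilinear form [x,y] = Q(x+y) − Q(x) − Q(y) with respect to some basis of V, and assume that −d is not a square in F, so that K = F[t]/(t² + d) is a quadratic field extension of F with norm map Nm : K → F. Then there is a bijection between the set of orientations of (V, Q), i.e. F-algebra homomorphisms ι : K → End_F(V) satisfying Q(ι(α)x) = Nm(α)·Q(x) for all α ∈ K and x ∈ V, and the set of isotropic lines of the base-changed quadratic space (V ⊗_F K, Q_K), i.e. 1-dimensional K-subspaces of V ⊗_F K on which Q_K vanishes identically. -/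
/-!
Statement 0: Let `F` be a field of characteristic `≠ 2` and `(V, Q)` a 2-dimensional
nondegenerate quadratic space over `F`.  Let `d` be the Gram determinant of the associated
bilinear form with respect to some basis, and assume `-d` is not a square, so that
`K = F[t]/(t² + d)` is a quadratic field extension with norm `Nm : K → F`.  Then the set of
orientations of `(V, Q)` — `F`-algebra homomorphisms `ι : K → End_F V` with
`Q (ι α x) = Nm α ⬝ Q x` — is in bijection with the set of isotropic lines of `(V ⊗_F K, Q_K)`.
-/

open QuadraticMap Polynomial

/-- The quadratic étale algebra `K = F[t]/(t² + d)`. -/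
noncomputable abbrev QuadExt (F : Type*) [Field F] (d : F) : Type _ :=
  AdjoinRoot (X ^ 2 + C d)

/-!
Write `τ = √-d` and decompose `K ⊗ V = V ⊕ τ V`.  An orientation `ι` is determined by `J = ι τ`,
which satisfies `J² = -d`, and its `τ`-eigenspace in `K ⊗ V` is the graph `{J y + τ y | y ∈ V}`.
Conversely, if `W` is isotropic and `Q` is anisotropic, then `W` meets `V` only in `0`, so
`x + τ y ↦ y` is injective on `W`; when `W` has half the dimension of `K ⊗ V` over `K`, this map is
bijective and `W` is the graph of some `J`, for which `J² = -d` because `τ W ⊆ W`.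
Finally `Q_K (J y + τ y) = (Q (J y) - d Q y) + τ [J y, y]`, so the graph is isotropic exactly when
`Q (p y + q J y) = (p² + d q²) Q y` for all `p`, `q`, `y`, i.e. when `ι` multiplies `Q` by the norm.
In dimension two, completing the square turns an isotropic vector into a square root of `-d`, so
`Q` is anisotropic.
-/

open scoped TensorProduct

section QuadraticForm

variable {R M : Type*} [CommRing R] [AddCommGroup M] [Module R M]

lemma quadraticForm_smul_add_smul (Q : QuadraticForm R M) (p q : R) (x y : M) :
    Q (p • x + q • y) = p ^ 2 * Q x + p * q * polar Q x y + q ^ 2 * Q y := by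
  rw [QuadraticMap.map_add Q, QuadraticMap.map_smul, QuadraticMap.map_smul, polar_smul_left,
    polar_smul_right]
  simp only [smul_eq_mul]
  ring

lemma quadraticForm_baseChange_tmul_add_tmul {A : Type*} [CommRing A] [Algebra R A]
    [Invertible (2 : R)] (Q : QuadraticForm R M) (a c : A) (x y : M) :
    Q.baseChange A (a ⊗ₜ x + c ⊗ₜ y) =
      Q x • (a * a) + polar Q x y • (a * c) + Q y • (c * c) := by
  let : Invertible (2 : A) := (Invertible.map (algebraMap R A) 2).copy 2 (map_ofNat _ 2).symm
  have polar_tmul : polar (Q.baseChange A) (a ⊗ₜ x) (c ⊗ₜ y) = polar Q x y • (a * c) := by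
    rw [← polarBilin_apply_apply, QuadraticForm.polarBilin_baseChange,
      LinearMap.BilinForm.baseChange_tmul, polarBilin_apply_apply, mul_comm]
  rw [QuadraticMap.map_add (Q.baseChange A), QuadraticForm.baseChange_tmul,
    QuadraticForm.baseChange_tmul, polar_tmul]
  abel

lemma det_gram_fin_two (Q : QuadraticForm R M) (v : Fin 2 → M) :
    (Matrix.of fun i j => polar Q (v i) (v j)).det =
      4 * Q (v 0) * Q (v 1) - polar Q (v 0) (v 1) ^ 2 := by
  rw [Matrix.det_fin_two]
  simp only [Matrix.of_apply, polar_self, polar_comm Q (v 1) (v 0)]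
  ring

lemma anisotropic_of_neg_det_gram_not_square {F V : Type*} [Field F] [AddCommGroup V] [Module F V]
    (Q : QuadraticForm F V) (b : Module.Basis (Fin 2) F V)
    (hsq : ∀ s : F, s ^ 2 ≠ -(Matrix.of fun i j => polar Q (b i) (b j)).det) :
    Q.Anisotropic := by
  rw [det_gram_fin_two] at hsq
  intro x hx
  obtain ⟨p, q, rfl⟩ : ∃ p q : F, p • b 0 + q • b 1 = x :=
    ⟨b.repr x 0, b.repr x 1, by rw [← Fin.sum_univ_two fun i => b.repr x i • b i, b.sum_repr]⟩
  rw [quadraticForm_smul_add_smul] at hx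
  have complete_square : (2 * Q (b 0) * p + polar Q (b 0) (b 1) * q) ^ 2 =
      -(4 * Q (b 0) * Q (b 1) - polar Q (b 0) (b 1) ^ 2) * q ^ 2 := by
    linear_combination 4 * Q (b 0) * hx
  have hq : q = 0 := by
    by_contra hq
    exact hsq ((2 * Q (b 0) * p + polar Q (b 0) (b 1) * q) / q)
      (by rw [div_pow, complete_square, mul_div_cancel_right₀ _ (pow_ne_zero 2 hq)])
  have hb : Q (b 0) ≠ 0 := fun h => hsq (polar Q (b 0) (b 1)) (by rw [h]; ring)
  have hp : p = 0 := by simpa [hq, hb] using hx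
  rw [hp, hq, zero_smul, zero_smul, add_zero]

end QuadraticForm

lemma exists_eq_graph_of_finrank_eq {F V V' : Type*} [Field F] [AddCommGroup V] [Module F V]
    [AddCommGroup V'] [Module F V'] [FiniteDimensional F V]
    {G : Submodule F (V × V')} (hG : ∀ x, (0, x) ∈ G → x = 0)
    (hdim : Module.finrank F G = Module.finrank F V) :
    ∃ f : V →ₗ[F] V', G = f.graph := by
  have fst_injective : Function.Injective (LinearMap.fst F V V' ∘ₗ G.subtype) := by
    rw [injective_iff_map_eq_zero]
    rintro ⟨⟨y, x⟩, hyx⟩ (rfl : y = 0)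
    exact Subtype.ext (Prod.ext rfl (hG x hyx))
  have : FiniteDimensional F G := Module.Finite.of_injective _ fst_injective
  exact Submodule.exists_eq_graph
    ⟨fst_injective,
      (LinearMap.injective_iff_surjective_of_finrank_eq_finrank hdim).1 fst_injective⟩

namespace QuadExt

section Field

variable {F : Type*} [Field F]

/-- The distinguished square root `τ` of `-d` in `K = F[t]/(t² + d)`, i.e. the class of `t`. -/
noncomputable abbrev sqrtNeg (d : F) : QuadExt F d :=
  AdjoinRoot.root (X ^ 2 + C d)

lemma sqrtNeg_mul_self (d : F) : sqrtNeg d * sqrtNeg d = algebraMap F (QuadExt F d) (-d) := by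
  have h := AdjoinRoot.eval₂_root (X ^ 2 + C d : F[X])
  rw [eval₂_add, eval₂_pow, eval₂_X, eval₂_C] at h
  rw [← pow_two, map_neg]
  exact eq_neg_of_add_eq_zero_left h

/-- The `F`-basis `(1, τ)` of `K = F[t]/(t² + d)`. -/
noncomputable def basis (d : F) : Module.Basis (Fin 2) F (QuadExt F d) :=
  (AdjoinRoot.powerBasis' (monic_X_pow_add_C d two_ne_zero)).basis.reindex
    (finCongr ((AdjoinRoot.powerBasis'_dim _).trans natDegree_X_pow_add_C))

@[simp]
lemma basis_zero (d : F) : basis d 0 = 1 := by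
  rw [basis, Module.Basis.reindex_apply, PowerBasis.basis_eq_pow]
  simp

@[simp]
lemma basis_one (d : F) : basis d 1 = sqrtNeg d := by
  rw [basis, Module.Basis.reindex_apply, PowerBasis.basis_eq_pow]
  simp

lemma finrank_eq_two (d : F) : Module.finrank F (QuadExt F d) = 2 := by
  rw [Module.finrank_eq_card_basis (basis d), Fintype.card_fin]

lemma exists_eq_smul_one_add_smul_sqrtNeg {d : F} (α : QuadExt F d) :
    ∃ p q : F, α = p • 1 + q • sqrtNeg d :=
  ⟨(basis d).repr α 0, (basis d).repr α 1, by
    conv_lhs => rw [← (basis d).sum_repr α, Fin.sum_univ_two, basis_zero, basis_one]⟩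

lemma smul_one_add_smul_sqrtNeg_eq_zero {d p q : F}
    (h : p • (1 : QuadExt F d) + q • sqrtNeg d = 0) : p = 0 ∧ q = 0 := by
  rw [← basis_zero, ← basis_one] at h
  have h' := Fintype.linearIndependent_iff.1 (basis d).linearIndependent ![p, q]
    (by simpa [Fin.sum_univ_two] using h)
  exact ⟨h' 0, h' 1⟩

lemma norm_smul_one_add_smul_sqrtNeg (d p q : F) :
    Algebra.norm F (p • (1 : QuadExt F d) + q • sqrtNeg d) = p ^ 2 + d * q ^ 2 := by
  have mul_one_eq : (p • (1 : QuadExt F d) + q • sqrtNeg d) * basis d 0 =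
      p • basis d 0 + q • basis d 1 := by
    simp
  have mul_sqrtNeg_eq : (p • (1 : QuadExt F d) + q • sqrtNeg d) * basis d 1 =
      (-(d * q)) • basis d 0 + p • basis d 1 := by
    simp only [basis_zero, basis_one, Algebra.smul_def, map_neg, map_mul]
    linear_combination algebraMap F (QuadExt F d) q * (sqrtNeg_mul_self d).trans (map_neg _ d)
  rw [Algebra.norm_eq_matrix_det (basis d), Matrix.det_fin_two]
  simp only [Algebra.leftMulMatrix_eq_repr_mul, mul_one_eq, mul_sqrtNeg_eq, map_add, map_smul,
    Module.Basis.repr_self, Finsupp.add_apply, Finsupp.smul_apply, Finsupp.single_eq_same,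
    Finsupp.single_eq_of_ne zero_ne_one, Finsupp.single_eq_of_ne one_ne_zero, smul_eq_mul]
  ring

lemma exists_algHom_sqrtNeg_eq {A : Type*} [Ring A] [Algebra F A] {d : F} {J : A}
    (hJ : J * J = algebraMap F A (-d)) :
    ∃ ι : QuadExt F d →ₐ[F] A, ι (sqrtNeg d) = J := by
  have aeval_eq_zero : aeval J (X ^ 2 + C d : F[X]) = 0 := by
    rw [map_add, map_pow, aeval_X, aeval_C, pow_two, hJ, map_neg, neg_add_cancel]
  refine ⟨Ideal.Quotient.liftₐ _ (aeval J) fun f hf => ?_, aeval_X (R := F) J⟩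
  obtain ⟨g, rfl⟩ := Ideal.mem_span_singleton.1 hf
  rw [map_mul, aeval_eq_zero, zero_mul]

lemma algHom_sqrtNeg_mul_self {A : Type*} [Ring A] [Algebra F A] {d : F}
    (ι : QuadExt F d →ₐ[F] A) : ι (sqrtNeg d) * ι (sqrtNeg d) = algebraMap F A (-d) := by
  rw [← map_mul, sqrtNeg_mul_self, AlgHom.commutes]

lemma irreducible_X_sq_add_C {d : F} (hsq : ∀ s : F, s ^ 2 ≠ -d) :
    Irreducible (X ^ 2 + C d : F[X]) := by
  simpa using (X_pow_sub_C_irreducible_iff_of_prime Nat.prime_two (a := -d)).2 hsq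

lemma two_mul_finrank {d : F} (hsq : ∀ s : F, s ^ 2 ≠ -d) (M : Type*)
    [AddCommGroup M] [Module F M] [Module (QuadExt F d) M] [IsScalarTower F (QuadExt F d) M] :
    2 * Module.finrank (QuadExt F d) M = Module.finrank F M := by
  have : Fact (Irreducible (X ^ 2 + C d : F[X])) := ⟨irreducible_X_sq_add_C hsq⟩
  have h := Module.finrank_mul_finrank F (QuadExt F d) M
  rwa [finrank_eq_two] at h

end Field

section Tensor

variable {F V : Type*} [Field F] [AddCommGroup V] [Module F V]

/-- The decomposition `τ V ⊕ V = K ⊗ V`, sending `(y, x)` to `τ ⊗ y + 1 ⊗ x`. The `τ`-component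
comes first so that the eigenspaces of interest are images of graphs `{(y, J y)}`. -/
noncomputable def prodEquivTensor (d : F) (V : Type*) [AddCommGroup V] [Module F V] :
    (V × V) ≃ₗ[F] QuadExt F d ⊗[F] V :=
  LinearEquiv.prodComm F V V ≪≫ₗ (LinearEquiv.piFinTwo F fun _ => V).symm ≪≫ₗ
    (Finsupp.linearEquivFunOnFinite F V (Fin 2)).symm ≪≫ₗ
    (TensorProduct.equivFinsuppOfBasisLeft (basis d)).symm

lemma prodEquivTensor_apply (d : F) (y x : V) :
    prodEquivTensor d V (y, x) = sqrtNeg d ⊗ₜ y + 1 ⊗ₜ x := by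
  simp [prodEquivTensor, Finsupp.sum_fintype, add_comm]

lemma sqrtNeg_smul_prodEquivTensor (d : F) (y x : V) :
    sqrtNeg d • prodEquivTensor d V (y, x) = prodEquivTensor d V (x, -d • y) := by
  simp only [prodEquivTensor_apply, smul_add, TensorProduct.smul_tmul', smul_eq_mul, mul_one,
    sqrtNeg_mul_self, Algebra.algebraMap_eq_smul_one, TensorProduct.smul_tmul]
  exact add_comm _ _

lemma baseChange_prodEquivTensor (d : F) (J : Module.End F V) (y x : V) :
    J.baseChange (QuadExt F d) (prodEquivTensor d V (y, x)) = prodEquivTensor d V (J y, J x) := by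
  simp only [prodEquivTensor_apply, map_add, LinearMap.baseChange_tmul]

lemma quadraticForm_baseChange_prodEquivTensor_eq_zero_iff [Invertible (2 : F)]
    (Q : QuadraticForm F V) (d : F) (y x : V) :
    Q.baseChange (QuadExt F d) (prodEquivTensor d V (y, x)) = 0 ↔
      Q x = d * Q y ∧ polar Q x y = 0 := by
  have expand : Q.baseChange (QuadExt F d) (prodEquivTensor d V (y, x)) =
      (Q x - d * Q y) • 1 + polar Q x y • sqrtNeg d := by
    rw [prodEquivTensor_apply, quadraticForm_baseChange_tmul_add_tmul, sqrtNeg_mul_self,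
      Algebra.algebraMap_eq_smul_one, mul_one, mul_one, polar_comm]
    module
  rw [expand]
  constructor
  · intro h
    obtain ⟨h₁, h₂⟩ := smul_one_add_smul_sqrtNeg_eq_zero h
    exact ⟨sub_eq_zero.1 h₁, h₂⟩
  · rintro ⟨h₁, h₂⟩
    rw [h₁, h₂, sub_self, zero_smul, zero_smul, add_zero]

/-- The `τ`-eigenspace of `J` in `K ⊗ V`. For `J = ι τ` it is the isotropic subspace attached to
the orientation `ι`. -/
noncomputable abbrev sqrtNegEigenspace (d : F) (J : Module.End F V) :
    Submodule (QuadExt F d) (QuadExt F d ⊗[F] V) :=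
  Module.End.eigenspace (J.baseChange (QuadExt F d)) (sqrtNeg d)

variable {d : F} {J : Module.End F V}

lemma prodEquivTensor_mem_sqrtNegEigenspace_iff (hJ : J * J = algebraMap F _ (-d)) {y x : V} :
    prodEquivTensor d V (y, x) ∈ sqrtNegEigenspace d J ↔ x = J y := by
  rw [Module.End.mem_eigenspace_iff, baseChange_prodEquivTensor, sqrtNeg_smul_prodEquivTensor,
    (prodEquivTensor d V).injective.eq_iff, Prod.mk.injEq]
  refine ⟨fun h => h.1.symm, ?_⟩
  rintro rfl
  exact ⟨rfl, by simpa using LinearMap.congr_fun hJ y⟩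

lemma sqrtNegEigenspace_injOn :
    Set.InjOn (sqrtNegEigenspace (V := V) d) {J | J * J = algebraMap F _ (-d)} := by
  intro J hJ J' hJ' h
  ext y
  have hy : prodEquivTensor d V (y, J y) ∈ sqrtNegEigenspace d J :=
    (prodEquivTensor_mem_sqrtNegEigenspace_iff hJ).2 rfl
  rw [h] at hy
  exact (prodEquivTensor_mem_sqrtNegEigenspace_iff hJ').1 hy

lemma sqrtNegEigenspace_isotropic_iff [Invertible (2 : F)] (Q : QuadraticForm F V)
    (hJ : J * J = algebraMap F _ (-d)) :
    (∀ z ∈ sqrtNegEigenspace d J, Q.baseChange (QuadExt F d) z = 0) ↔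
      ∀ y, Q (J y) = d * Q y ∧ polar Q (J y) y = 0 := by
  simp only [(prodEquivTensor d V).surjective.forall, Prod.forall,
    prodEquivTensor_mem_sqrtNegEigenspace_iff hJ,
    quadraticForm_baseChange_prodEquivTensor_eq_zero_iff, forall_eq]

lemma algHom_map_eq_norm_mul_iff (Q : QuadraticForm F V)
    (ι : QuadExt F d →ₐ[F] Module.End F V) :
    (∀ α x, Q (ι α x) = Algebra.norm F α * Q x) ↔
      ∀ y, Q (ι (sqrtNeg d) y) = d * Q y ∧ polar Q (ι (sqrtNeg d) y) y = 0 := by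
  have apply_eq (p q : F) (y : V) :
      ι (p • 1 + q • sqrtNeg d) y = p • y + q • ι (sqrtNeg d) y := by
    simp
  constructor
  · intro h y
    have scale (p q : F) : Q (p • y + q • ι (sqrtNeg d) y) = (p ^ 2 + d * q ^ 2) * Q y := by
      rw [← apply_eq, h, norm_smul_one_add_smul_sqrtNeg]
    have map_sqrtNeg : Q (ι (sqrtNeg d) y) = d * Q y := by simpa using scale 0 1
    have map_add_one : Q (y + ι (sqrtNeg d) y) = (1 + d) * Q y := by simpa using scale 1 1
    refine ⟨map_sqrtNeg, ?_⟩
    rw [polar_comm, polar, map_add_one, map_sqrtNeg]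
    ring
  · intro h α y
    obtain ⟨p, q, rfl⟩ := exists_eq_smul_one_add_smul_sqrtNeg α
    rw [apply_eq, quadraticForm_smul_add_smul, norm_smul_one_add_smul_sqrtNeg, polar_comm,
      (h y).1, (h y).2]
    ring

lemma two_mul_finrank_sqrtNegEigenspace (hsq : ∀ s : F, s ^ 2 ≠ -d)
    (hJ : J * J = algebraMap F _ (-d)) :
    2 * Module.finrank (QuadExt F d) (sqrtNegEigenspace d J) = Module.finrank F V := by
  have eq_map_graph : (sqrtNegEigenspace d J).restrictScalars F =
      J.graph.map (prodEquivTensor d V : V × V →ₗ[F] QuadExt F d ⊗[F] V) := by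
    ext z
    obtain ⟨⟨y, x⟩, rfl⟩ := (prodEquivTensor d V).surjective z
    simp [prodEquivTensor_mem_sqrtNegEigenspace_iff hJ]
  calc 2 * Module.finrank (QuadExt F d) (sqrtNegEigenspace d J)
      = Module.finrank F ((sqrtNegEigenspace d J).restrictScalars F) :=
          two_mul_finrank hsq (sqrtNegEigenspace d J)
    _ = Module.finrank F J.graph := by rw [eq_map_graph, LinearEquiv.finrank_map_eq]
    _ = Module.finrank F V := by
      rw [LinearMap.graph_eq_range_prod]
      exact LinearMap.finrank_range_of_inj fun y y' h => congrArg Prod.fst h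

lemma exists_sqrtNegEigenspace_eq [Invertible (2 : F)] [FiniteDimensional F V]
    (hsq : ∀ s : F, s ^ 2 ≠ -d) {Q : QuadraticForm F V} (hQ : Q.Anisotropic)
    {W : Submodule (QuadExt F d) (QuadExt F d ⊗[F] V)}
    (hdim : 2 * Module.finrank (QuadExt F d) W = Module.finrank F V)
    (hW : ∀ z ∈ W, Q.baseChange (QuadExt F d) z = 0) :
    ∃ J : Module.End F V, J * J = algebraMap F _ (-d) ∧ sqrtNegEigenspace d J = W := by
  obtain ⟨J, hJ⟩ : ∃ J : Module.End F V,
      (W.restrictScalars F).map (prodEquivTensor d V).symm.toLinearMap = J.graph := by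
    refine exists_eq_graph_of_finrank_eq (fun x hx => ?_) ?_
    · have hx' : prodEquivTensor d V (0, x) ∈ W := by simpa using hx
      have h := (quadraticForm_baseChange_prodEquivTensor_eq_zero_iff Q d 0 x).1 (hW _ hx')
      exact hQ x (by simpa using h.1)
    · rw [LinearEquiv.finrank_map_eq, ← hdim]
      exact (two_mul_finrank hsq W).symm
  have mem_iff (y x : V) : prodEquivTensor d V (y, x) ∈ W ↔ x = J y := by
    have h := SetLike.ext_iff.1 hJ (y, x)
    simpa using h
  have J_mul_self : J * J = algebraMap F _ (-d) := by
    ext y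
    have h := W.smul_mem (sqrtNeg d) ((mem_iff y (J y)).2 rfl)
    rw [sqrtNeg_smul_prodEquivTensor, mem_iff] at h
    simpa using h.symm
  refine ⟨J, J_mul_self, ?_⟩
  ext z
  obtain ⟨⟨y, x⟩, rfl⟩ := (prodEquivTensor d V).surjective z
  rw [prodEquivTensor_mem_sqrtNegEigenspace_iff J_mul_self, mem_iff]

end Tensor

end QuadExt

open QuadExt in
theorem statement_0_general {F V : Type*} [Field F] [AddCommGroup V] [Module F V]
    [FiniteDimensional F V] [Invertible (2 : F)] (Q : QuadraticForm F V) (hQ : Q.Anisotropic)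
    (d : F) (hsq : ∀ s : F, s ^ 2 ≠ -d) :
    Nonempty
      ({ι : QuadExt F d →ₐ[F] Module.End F V //
          ∀ (α : QuadExt F d) (x : V), Q (ι α x) = Algebra.norm F α * Q x} ≃
        {W : Submodule (QuadExt F d) (QuadExt F d ⊗[F] V) //
          2 * Module.finrank (QuadExt F d) W = Module.finrank F V ∧
            ∀ x ∈ W, Q.baseChange (QuadExt F d) x = 0}) := by
  have isotropic (ι : QuadExt F d →ₐ[F] Module.End F V) :
      (∀ z ∈ sqrtNegEigenspace d (ι (sqrtNeg d)), Q.baseChange (QuadExt F d) z = 0) ↔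
        ∀ α x, Q (ι α x) = Algebra.norm F α * Q x :=
    (sqrtNegEigenspace_isotropic_iff Q (algHom_sqrtNeg_mul_self ι)).trans
      (algHom_map_eq_norm_mul_iff Q ι).symm
  refine ⟨Equiv.ofBijective (fun ι => ⟨sqrtNegEigenspace d (ι.1 (sqrtNeg d)),
    two_mul_finrank_sqrtNegEigenspace hsq (algHom_sqrtNeg_mul_self ι.1), (isotropic ι.1).2 ι.2⟩)
    ⟨fun ι ι' h => ?_, fun ⟨W, hdim, hW⟩ => ?_⟩⟩
  · exact Subtype.ext <| AdjoinRoot.algHom_ext <| sqrtNegEigenspace_injOn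
      (algHom_sqrtNeg_mul_self ι.1) (algHom_sqrtNeg_mul_self ι'.1) (congrArg Subtype.val h)
  · obtain ⟨J, hJ, rfl⟩ := exists_sqrtNegEigenspace_eq hsq hQ hdim hW
    obtain ⟨ι, rfl⟩ := exists_algHom_sqrtNeg_eq hJ
    exact ⟨⟨ι, (isotropic ι).1 hW⟩, rfl⟩

theorem statement_0 {F V : Type*} [Field F] [AddCommGroup V] [Module F V]
    (h2 : (2 : F) ≠ 0)
    (Q : QuadraticForm F V)
    (hQ : LinearMap.SeparatingLeft (QuadraticMap.polarBilin Q))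
    (b : Module.Basis (Fin 2) F V) (d : F)
    (hd : d = (Matrix.of fun i j => QuadraticMap.polar Q (b i) (b j)).det)
    (hsq : ∀ s : F, s ^ 2 ≠ -d) :
    letI : Invertible (2 : F) := invertibleOfNonzero h2
    Nonempty
      ({ι : QuadExt F d →ₐ[F] Module.End F V //
          ∀ (α : QuadExt F d) (x : V), Q (ι α x) = Algebra.norm F α * Q x} ≃
        {W : Submodule (QuadExt F d) (TensorProduct F (QuadExt F d) V) //
          Module.finrank (QuadExt F d) ↥W = 1 ∧
            ∀ x ∈ W, Q.baseChange (QuadExt F d) x = 0}) := by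
  let : Invertible (2 : F) := invertibleOfNonzero h2
  have := Module.Finite.of_basis b
  have anisotropic := anisotropic_of_neg_det_gram_not_square Q b (hd ▸ hsq)
  simpa [Module.finrank_eq_card_basis b] using statement_0_general Q anisotropic d hsq
end

section
/- Let p be an odd prime and (V, Q) a nondegenerate quadratic space over ℚ_p of dimension n ≥ 3. If L₁ and L₂ are two self-dual lattices in V, then there exists a ℚ_p-linear isometry g of (V, Q) with det(g) = 1 such that g(L₁) = L₂; that is, the special orthogonal group SO(V)(ℚ_p) acts transitively on the set of self-dual lattices in V. -/
/-!
Statement 1: Let `p` be an odd prime and `(V, Q)` a nondegenerate quadratic space over `ℚ_p`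
of dimension `n ≥ 3`.  If `L₁` and `L₂` are two self-dual `ℤ_p`-lattices in `V`, then there is a
`ℚ_p`-linear isometry `g` of `(V, Q)` with `det g = 1` and `g (L₁) = L₂`; i.e. `SO(V)(ℚ_p)` acts
transitively on the set of self-dual lattices in `V`.
-/

open QuadraticMap

variable (p : ℕ) [Fact p.Prime]
variable {V : Type*} [AddCommGroup V] [Module ℚ_[p] V] [Module ℤ_[p] V]
  [IsScalarTower ℤ_[p] ℚ_[p] V]

/-- `L` is a `ℤ_p`-lattice in the `ℚ_p`-vector space `V`:
a finitely generated `ℤ_p`-submodule spanning `V` over `ℚ_p`. -/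
def IsLattice (L : Submodule ℤ_[p] V) : Prop :=
  L.FG ∧ Submodule.span ℚ_[p] (L : Set V) = ⊤

/-- The dual lattice `L^∨ = {x ∈ V : [x, y] ∈ ℤ_p for all y ∈ L}` with respect to the
bilinear form `[x, y] = Q (x + y) - Q x - Q y` associated to `Q`. -/
noncomputable def dualLattice (Q : QuadraticForm ℚ_[p] V) (L : Submodule ℤ_[p] V) :
    Submodule ℤ_[p] V :=
  LinearMap.BilinForm.dualSubmodule (QuadraticMap.polarBilin Q) L

/-!
Work over a Henselian local principal ideal domain `R` with finite residue field in which `2` is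
invertible. On a self-dual lattice the bilinear form is unimodular, so by polarization it takes a
unit value `B v v`, and it stays unimodular on the orthogonal complement of such a `v`. In rank at
least two it therefore takes the unit values `a`, `b` on two orthogonal vectors; since
`a x² + b y² = 1` is solvable over the residue field and the solution lifts, the form takes the
value `1`. Splitting off such vectors gives every self-dual lattice a basis with Gram matrix
`diag(1, …, 1, d)`, `d` a unit.

Comparing two such bases of the same quadratic space, `d' = t² d` with `t` the determinant of the
change of basis, so `t` is a unit. Dividing the last vector of the second basis by `t` changes
neither the lattice nor its orthogonality, and turns the change of basis into an isometry of
determinant one.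
-/

open Module IsLocalRing
open Submodule hiding IsLattice

section HenselianLocalRing

variable {R : Type*} [CommRing R]

theorem exists_unit_sq_eq_of_sub_one_mem_maximalIdeal [HenselianLocalRing R]
    (h2 : IsUnit (2 : R)) {u : R} (hu : u - 1 ∈ maximalIdeal R) : ∃ s : Rˣ, (s : R) ^ 2 = u := by
  have eval_mem : (Polynomial.X ^ 2 - Polynomial.C u).eval 1 ∈ maximalIdeal R := by
    simpa using neg_mem hu
  obtain ⟨s, hs, hs_one⟩ := HenselianLocalRing.is_henselian (Polynomial.X ^ 2 - Polynomial.C u)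
    (Polynomial.monic_X_pow_sub_C u two_ne_zero) 1 eval_mem (by simpa [one_add_one_eq_two] using h2)
  have s_unit : IsUnit s :=
    isUnit_of_mem_nonunits_one_sub_self s (by simpa using neg_mem hs_one)
  exact ⟨s_unit.unit, by simpa [sub_eq_zero] using hs⟩

theorem exists_mul_sq_add_mul_sq_eq_one_of_finite {F : Type*} [Field F] [Finite F]
    (h2 : (2 : F) ≠ 0) {a b : F} (ha : a ≠ 0) (hb : b ≠ 0) :
    ∃ x y : F, a * x ^ 2 + b * y ^ 2 = 1 := by
  have := Fintype.ofFinite F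
  have char_ne_two : ringChar F ≠ 2 := fun h ↦ h2 (by exact_mod_cast h ▸ ringChar.Nat.cast_ringChar)
  obtain ⟨x, y, hxy⟩ := FiniteField.exists_root_sum_quadratic
    (Polynomial.degree_quadratic (b := 0) (c := -1) ha)
    (Polynomial.degree_quadratic (b := 0) (c := 0) hb)
    (FiniteField.odd_card_of_char_ne_two char_ne_two)
  refine ⟨x, y, ?_⟩
  simp only [Polynomial.eval_add, Polynomial.eval_mul, Polynomial.eval_C, Polynomial.eval_pow,
    Polynomial.eval_X] at hxy
  linear_combination hxy

theorem exists_mul_sq_add_mul_sq_eq_one [HenselianLocalRing R] [Finite (ResidueField R)]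
    (h2 : IsUnit (2 : R)) {a b : R} (ha : IsUnit a) (hb : IsUnit b) :
    ∃ x y : R, a * x ^ 2 + b * y ^ 2 = 1 := by
  have residue_two : (2 : ResidueField R) ≠ 0 := by
    exact_mod_cast (h2.map (residue R)).ne_zero
  obtain ⟨x₀, y₀, hxy₀⟩ := exists_mul_sq_add_mul_sq_eq_one_of_finite residue_two
    (ha.map (residue R)).ne_zero (hb.map (residue R)).ne_zero
  obtain ⟨x, rfl⟩ := residue_surjective x₀
  obtain ⟨y, rfl⟩ := residue_surjective y₀
  have sub_one_mem : a * x ^ 2 + b * y ^ 2 - 1 ∈ maximalIdeal R := by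
    rw [← residue_eq_zero_iff]
    simpa [sub_eq_zero] using hxy₀
  obtain ⟨s, hs⟩ := exists_unit_sq_eq_of_sub_one_mem_maximalIdeal h2 sub_one_mem
  refine ⟨x * ↑s⁻¹, y * ↑s⁻¹, ?_⟩
  calc a * (x * ↑s⁻¹) ^ 2 + b * (y * ↑s⁻¹) ^ 2
      = (a * x ^ 2 + b * y ^ 2) * (↑s⁻¹ : R) ^ 2 := by ring
    _ = 1 := by rw [← hs, ← mul_pow, s.mul_inv, one_pow]

end HenselianLocalRing

section KerOfUnitValue

variable {R M : Type*} [CommRing R] [AddCommGroup M] [Module R M] {f : Dual R M} {v : M}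

theorem exists_projection_ker_of_isUnit (hv : IsUnit (f v)) :
    ∃ π : M →ₗ[R] LinearMap.ker f, π v = 0 ∧ ∀ y : LinearMap.ker f, π y = y := by
  obtain ⟨u, hu⟩ := hv
  let π₀ : M →ₗ[R] M := LinearMap.id - ((↑u⁻¹ : R) • f).smulRight v
  have π₀_mem (x : M) : π₀ x ∈ LinearMap.ker f := by simp [π₀, ← hu, mul_right_comm]
  have π₀_self : π₀ v = 0 := by simp [π₀, ← hu]
  have π₀_of_mem (y : LinearMap.ker f) : π₀ y = y := by simp [π₀]
  exact ⟨π₀.codRestrict _ π₀_mem, Subtype.ext π₀_self, fun y ↦ Subtype.ext (π₀_of_mem y)⟩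

theorem exists_basis_eq_cons_of_basis_ker (hv : IsUnit (f v)) {n : ℕ}
    (b : Basis (Fin n) R (LinearMap.ker f)) :
    ∃ c : Basis (Fin (n + 1)) R M, ⇑c = Fin.cons v ((↑) ∘ b) := by
  have independent (r : R) (x : M) (hx : x ∈ LinearMap.ker f) (h : r • v + x = 0) : r = 0 := by
    have hr : r * f v = 0 := by simpa [LinearMap.mem_ker.1 hx] using congrArg f h
    exact hv.mul_left_eq_zero.1 hr
  have spanning (z : M) : ∃ r : R, z + r • v ∈ LinearMap.ker f := by
    obtain ⟨u, hu⟩ := hv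
    exact ⟨-(f z * ↑u⁻¹), by simp [← hu]⟩
  exact ⟨Basis.mkFinCons v b independent spanning, Basis.coe_mkFinCons v b independent spanning⟩

theorem finite_ker_of_isUnit [Module.Finite R M] (hv : IsUnit (f v)) :
    Module.Finite R (LinearMap.ker f) := by
  obtain ⟨π, -, hπ⟩ := exists_projection_ker_of_isUnit hv
  exact Module.Finite.of_surjective π fun y ↦ ⟨y, hπ y⟩

theorem free_ker_of_isUnit [IsLocalRing R] [Module.Finite R M] [Module.Free R M]
    (hv : IsUnit (f v)) : Module.Free R (LinearMap.ker f) := by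
  have := finite_ker_of_isUnit hv
  obtain ⟨π, -, hπ⟩ := exists_projection_ker_of_isUnit hv
  have : Module.Projective R (LinearMap.ker f) :=
    Module.Projective.of_split (LinearMap.ker f).subtype π (LinearMap.ext hπ)
  exact Module.free_of_flat_of_isLocalRing

theorem finrank_ker_add_one_of_isUnit [IsLocalRing R] [Module.Finite R M] [Module.Free R M]
    (hv : IsUnit (f v)) : finrank R (LinearMap.ker f) + 1 = finrank R M := by
  have := finite_ker_of_isUnit hv
  have := free_ker_of_isUnit hv
  obtain ⟨c, -⟩ := exists_basis_eq_cons_of_basis_ker hv (finBasis R (LinearMap.ker f))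
  simpa using (finrank_eq_card_basis c).symm

end KerOfUnitValue

section UnimodularForm

variable {R M : Type*} [CommRing R] [AddCommGroup M] [Module R M]
  {B : LinearMap.BilinForm R M} {v : M}

theorem restrict_ker_surjective (hB : B.IsSymm) (hsurj : Function.Surjective B)
    (hv : IsUnit (B v v)) : Function.Surjective (B.restrict (LinearMap.ker (B v))) := by
  intro f
  obtain ⟨π, hπv, hπ⟩ := exists_projection_ker_of_isUnit hv
  obtain ⟨x, hx⟩ := hsurj (f ∘ₗ π)
  have x_mem : x ∈ LinearMap.ker (B v) := by
    rw [LinearMap.mem_ker, hB.eq v x, hx, LinearMap.comp_apply, hπv, map_zero]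
  refine ⟨⟨x, x_mem⟩, LinearMap.ext fun y ↦ ?_⟩
  calc B x y = f (π y) := by rw [hx, LinearMap.comp_apply]
    _ = f y := by rw [hπ]

theorem exists_isUnit_apply_self [IsLocalRing R] (h2 : IsUnit (2 : R)) (hB : B.IsSymm) {x y : M}
    (hxy : IsUnit (B x y)) : ∃ v, IsUnit (B v v) := by
  by_contra! h
  have apply_self_mem (v : M) : B v v ∈ maximalIdeal R := (mem_maximalIdeal _).2 (h v)
  have polarization : B (x + y) (x + y) - B x x - B y y = 2 * B x y := by
    simp only [map_add, LinearMap.add_apply, hB.eq y x]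
    ring
  have mem : 2 * B x y ∈ maximalIdeal R :=
    polarization ▸ sub_mem (sub_mem (apply_self_mem _) (apply_self_mem _)) (apply_self_mem _)
  exact (mem_maximalIdeal _).1 mem (h2.mul hxy)

theorem exists_isUnit_apply_self_of_surjective [IsLocalRing R] [Module.Free R M] [Nontrivial M]
    (h2 : IsUnit (2 : R)) (hB : B.IsSymm) (hsurj : Function.Surjective B) :
    ∃ v, IsUnit (B v v) := by
  let b := Module.Free.chooseBasis R M
  obtain ⟨i⟩ := b.index_nonempty
  obtain ⟨x, hx⟩ := hsurj (b.coord i)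
  have apply_eq_one : B x (b i) = 1 := by simp [hx]
  exact exists_isUnit_apply_self h2 hB (apply_eq_one ▸ isUnit_one)

theorem exists_apply_self_eq_one [HenselianLocalRing R] [Finite (ResidueField R)]
    [Module.Finite R M] [Module.Free R M] (h2 : IsUnit (2 : R)) (hB : B.IsSymm)
    (hsurj : Function.Surjective B) (hrank : 2 ≤ finrank R M) : ∃ v, B v v = 1 := by
  have : Nontrivial M := nontrivial_of_finrank_pos (R := R) (by omega)
  obtain ⟨v, hv⟩ := exists_isUnit_apply_self_of_surjective h2 hB hsurj
  have := free_ker_of_isUnit hv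
  have : Nontrivial (LinearMap.ker (B v)) :=
    nontrivial_of_finrank_pos (R := R) (by have := finrank_ker_add_one_of_isUnit hv; omega)
  obtain ⟨⟨w, hvw⟩, hw⟩ := exists_isUnit_apply_self_of_surjective h2
    (hB.restrict (LinearMap.ker (B v))) (restrict_ker_surjective hB hsurj hv)
  rw [LinearMap.mem_ker] at hvw
  obtain ⟨x, y, hxy⟩ := exists_mul_sq_add_mul_sq_eq_one h2 hv hw
  refine ⟨x • v + y • w, ?_⟩
  calc B (x • v + y • w) (x • v + y • w) = B v v * x ^ 2 + B w w * y ^ 2 := by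
        simp only [map_add, map_smul, LinearMap.add_apply, LinearMap.smul_apply, hB.eq w v, hvw,
          smul_eq_mul]
        ring
    _ = 1 := hxy

theorem exists_basis_toMatrix_eq_diagonal_cons (hB : B.IsSymm) (hv : IsUnit (B v v)) {n : ℕ}
    (b : Basis (Fin n) R (LinearMap.ker (B v))) {d : Fin n → R}
    (hb : (B.restrict (LinearMap.ker (B v))).toMatrix b = Matrix.diagonal d) :
    ∃ c : Basis (Fin (n + 1)) R M, B.toMatrix c = Matrix.diagonal (Fin.cons (B v v) d) := by
  obtain ⟨c, hc⟩ := exists_basis_eq_cons_of_basis_ker hv b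
  have apply_basis_eq_zero (j : Fin n) : B v (b j) = 0 := (b j).2
  have apply_basis_basis (i j : Fin n) : B (b i) (b j) = Matrix.diagonal d i j := by
    rw [← hb, LinearMap.BilinForm.toMatrix_apply, LinearMap.BilinForm.restrict_apply]
    rfl
  refine ⟨c, Matrix.ext fun i j ↦ ?_⟩
  rw [LinearMap.BilinForm.toMatrix_apply, hc]
  cases i using Fin.cases <;> cases j using Fin.cases <;>
    simp [apply_basis_eq_zero, apply_basis_basis, hB.eq _ v, Matrix.diagonal_apply,
      (Fin.succ_ne_zero _).symm]

theorem fin_cons_one_mulSingle_last {n : ℕ} (d : R) :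
    (Fin.cons 1 (Pi.mulSingle (Fin.last n) d) : Fin (n + 2) → R) =
      Pi.mulSingle (Fin.last (n + 1)) d := by
  ext i
  cases i using Fin.cases <;> simp [Pi.mulSingle_apply, Fin.ext_iff]

theorem exists_basis_toMatrix_eq_diagonal_mulSingle [HenselianLocalRing R]
    [Finite (ResidueField R)] [Module.Finite R M] [Module.Free R M] (h2 : IsUnit (2 : R))
    (hB : B.IsSymm) (hsurj : Function.Surjective B) {n : ℕ} (hrank : finrank R M = n + 1) :
    ∃ (b : Basis (Fin (n + 1)) R M) (d : Rˣ),
      B.toMatrix b = Matrix.diagonal (Pi.mulSingle (Fin.last n) (d : R)) := by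
  induction n generalizing M with
  | zero =>
    have : Nontrivial M := nontrivial_of_finrank_pos (R := R) (by omega)
    obtain ⟨v, hv⟩ := exists_isUnit_apply_self_of_surjective h2 hB hsurj
    have := finite_ker_of_isUnit hv
    have := free_ker_of_isUnit hv
    have rank_ker := finrank_ker_add_one_of_isUnit hv
    let b := finBasisOfFinrankEq R (LinearMap.ker (B v)) (n := 0) (by omega)
    obtain ⟨c, hc⟩ := exists_basis_toMatrix_eq_diagonal_cons hB hv b (d := 1)
      (Subsingleton.elim _ _)
    refine ⟨c, hv.unit, hc.trans (congrArg _ (funext fun i ↦ ?_))⟩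
    fin_cases i
    simp
  | succ n ih =>
    obtain ⟨v, hv_one⟩ := exists_apply_self_eq_one h2 hB hsurj (by omega)
    have hv : IsUnit (B v v) := hv_one ▸ isUnit_one
    have := finite_ker_of_isUnit hv
    have := free_ker_of_isUnit hv
    have rank_ker := finrank_ker_add_one_of_isUnit hv
    obtain ⟨b, d, hb⟩ := ih (hB.restrict (LinearMap.ker (B v)))
      (restrict_ker_surjective hB hsurj hv) (by omega)
    obtain ⟨c, hc⟩ := exists_basis_toMatrix_eq_diagonal_cons hB hv b hb
    exact ⟨c, d, by rw [hc, hv_one, fin_cons_one_mulSingle_last]⟩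

end UnimodularForm

section Lattice

variable {R K E : Type*} [CommRing R] [Field K] [Algebra R K]
  [AddCommGroup E] [Module K E] [Module R E] [IsScalarTower R K E]
  {B : LinearMap.BilinForm K E} {L : Submodule R E}

theorem span_range_extendOfIsLattice [IsFractionRing R K] [Submodule.IsLattice K L] {ι : Type*}
    (b : Basis ι R L) : span R (Set.range (b.extendOfIsLattice K)) = L := by
  have coe_eq : ⇑(b.extendOfIsLattice K) = L.subtype ∘ b := funext fun i ↦ by simp
  rw [coe_eq, Set.range_comp, span_image, b.span_eq, Submodule.map_subtype_top]

theorem finite_of_isLattice (L : Submodule R E) [Submodule.IsLattice K L] :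
    Module.Finite K E := by
  obtain ⟨s, hs⟩ := Submodule.IsLattice.fg (M := L)
  refine ⟨⟨s, ?_⟩⟩
  rw [← span_span_of_tower R, hs, Submodule.IsLattice.span_eq_top]

variable [IsDomain R] [IsFractionRing R K]

theorem dualSubmoduleToDual_surjective [Module.Free R L] [Submodule.IsLattice K L]
    (hB : B.Nondegenerate) : Function.Surjective (B.dualSubmoduleToDual L) := by
  intro f
  have := finite_of_isLattice L
  let b := Module.Free.chooseBasis R L
  let fK : Dual K E := (b.extendOfIsLattice K).constr K fun i ↦ algebraMap R K (f (b i))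
  have fK_basis (i) : fK (b i) = algebraMap R K (f (b i)) := by
    rw [← b.extendOfIsLattice_apply K, Basis.constr_basis]
  have fK_coe (y : L) : fK y = algebraMap R K (f y) :=
    LinearMap.congr_fun (f := fK.restrictScalars R ∘ₗ L.subtype)
      (g := Algebra.linearMap R K ∘ₗ f) (b.ext fK_basis) y
  let x : E := (B.toDual hB).symm fK
  have apply_x (y : L) : B x y = algebraMap R K (f y) := by
    rw [← fK_coe, LinearMap.BilinForm.apply_toDual_symm_apply]
  have x_mem : x ∈ B.dualSubmodule L := fun y hy ↦ Submodule.mem_one.2 ⟨_, (apply_x ⟨y, hy⟩).symm⟩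
  refine ⟨⟨x, x_mem⟩, LinearMap.ext fun y ↦ IsFractionRing.injective R K ?_⟩
  simp [apply_x]

/-- The `R`-valued bilinear form to which a `K`-valued form restricts on an `R`-submodule contained
in its own dual. -/
noncomputable def integralForm (B : LinearMap.BilinForm K E) (L : Submodule R E)
    (hL : L ≤ B.dualSubmodule L) : LinearMap.BilinForm R L :=
  B.dualSubmoduleToDual L ∘ₗ inclusion hL

theorem algebraMap_integralForm_apply (hL : L ≤ B.dualSubmodule L) (x y : L) :
    algebraMap R K (integralForm B L hL x y) = B x y := by
  simp [integralForm]

theorem integralForm_isSymm (hB : B.IsSymm) (hL : L ≤ B.dualSubmodule L) :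
    (integralForm B L hL).IsSymm where
  eq x y := IsFractionRing.injective R K <| by
    simp only [algebraMap_integralForm_apply, hB.eq (x : E) y]

theorem integralForm_surjective [Module.Free R L] [Submodule.IsLattice K L]
    (hB : B.Nondegenerate) (hL : B.dualSubmodule L = L) :
    Function.Surjective (integralForm B L hL.ge) := by
  intro f
  obtain ⟨⟨x, hx⟩, rfl⟩ := dualSubmoduleToDual_surjective hB f
  exact ⟨⟨x, hL.le hx⟩, rfl⟩

theorem toMatrix_extendOfIsLattice [Submodule.IsLattice K L] (hL : L ≤ B.dualSubmodule L)
    {ι : Type*} [Fintype ι] [DecidableEq ι] (b : Basis ι R L) :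
    B.toMatrix (b.extendOfIsLattice K) =
      ((integralForm B L hL).toMatrix b).map (algebraMap R K) := by
  ext i j
  simp [LinearMap.BilinForm.toMatrix_apply, algebraMap_integralForm_apply]

theorem exists_basis_span_eq_toMatrix_eq_diagonal_mulSingle [IsPrincipalIdealRing R]
    [HenselianLocalRing R] [Finite (ResidueField R)] [Submodule.IsLattice K L]
    (h2 : IsUnit (2 : R)) (hsymm : B.IsSymm) (hB : B.Nondegenerate)
    (hL : B.dualSubmodule L = L) {n : ℕ} (hrank : finrank K E = n + 1) :
    ∃ (b : Basis (Fin (n + 1)) K E) (d : Rˣ), span R (Set.range b) = L ∧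
      B.toMatrix b = Matrix.diagonal (Pi.mulSingle (Fin.last n) (algebraMap R K d)) := by
  have finrank_L : finrank R L = n + 1 := by
    rw [← hrank, finrank, finrank, Submodule.IsLattice.rank' K L]
  obtain ⟨b, d, hb⟩ := exists_basis_toMatrix_eq_diagonal_mulSingle h2
    (integralForm_isSymm hsymm hL.ge) (integralForm_surjective hB hL) finrank_L
  refine ⟨b.extendOfIsLattice K, d, span_range_extendOfIsLattice b, ?_⟩
  rw [toMatrix_extendOfIsLattice hL.ge, hb, Matrix.diagonal_map (map_zero _)]
  exact congrArg _ (funext fun i ↦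
    Pi.apply_mulSingle (fun _ ↦ algebraMap R K) (fun _ ↦ map_one _) (Fin.last n) (d : R) i)

end Lattice

section Rescaling

variable {R K E ι : Type*} [CommRing R] [Field K] [Algebra R K]
  [AddCommGroup E] [Module K E] {B : LinearMap.BilinForm K E}

theorem span_range_units_smul [Module R E] (w : ι → Rˣ) (v : ι → E) :
    span R (Set.range fun i ↦ w i • v i) = span R (Set.range v) := by
  simp only [span_range_eq_iSup, span_singleton_group_smul_eq]

theorem exists_unit_algebraMap_eq_of_pow_eq [IsIntegrallyClosed R] [IsFractionRing R K]
    {t : K} {n : ℕ} (hn : n ≠ 0) {u : Rˣ} (ht : t ^ n = algebraMap R K u) :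
    ∃ s : Rˣ, algebraMap R K s = t := by
  obtain ⟨s, rfl⟩ := IsIntegrallyClosed.exists_algebraMap_eq_of_isIntegral_pow (R := R)
    (Nat.pos_of_ne_zero hn) (ht ▸ isIntegral_algebraMap)
  have pow_eq : s ^ n = u := IsFractionRing.injective R K (by rw [map_pow, ht])
  have s_unit : IsUnit s := (isUnit_pow_iff hn).1 (pow_eq ▸ u.isUnit)
  exact ⟨s_unit.unit, rfl⟩

variable [Fintype ι] [DecidableEq ι]

theorem det_toMatrix_eq_det_sq_mul (b c : Basis ι K E) (B : LinearMap.BilinForm K E) :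
    (B.toMatrix c).det = b.det c ^ 2 * (B.toMatrix b).det := by
  rw [← LinearMap.BilinForm.toMatrix_mul_basis_toMatrix b c B, Matrix.det_mul, Matrix.det_mul,
    Matrix.det_transpose, ← Basis.det_apply]
  ring

theorem det_unitsSMul_eq_prod_mul (b c : Basis ι K E) (w : ι → Kˣ) :
    b.det (c.unitsSMul w) = (∏ i, (w i : K)) * b.det c := by
  have coe_eq : ⇑(c.unitsSMul w) = fun i ↦ (w i : K) • c i := funext fun i ↦ c.unitsSMul_apply i
  rw [coe_eq]
  exact b.det.toMultilinearMap.map_smul_univ _ _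

theorem toMatrix_unitsSMul_apply (c : Basis ι K E) (w : ι → Kˣ) (B : LinearMap.BilinForm K E)
    (i j : ι) : B.toMatrix (c.unitsSMul w) i j = w i * w j * B.toMatrix c i j := by
  simp [LinearMap.BilinForm.toMatrix_apply, Basis.unitsSMul_apply, Units.smul_def]
  ring

theorem exists_unit_det_eq_of_toMatrix_eq_diagonal_mulSingle [IsIntegrallyClosed R]
    [IsFractionRing R K] {b c : Basis ι K E} {i₀ : ι} {d e : Rˣ}
    (hb : B.toMatrix b = Matrix.diagonal (Pi.mulSingle i₀ (algebraMap R K d)))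
    (hc : B.toMatrix c = Matrix.diagonal (Pi.mulSingle i₀ (algebraMap R K e))) :
    ∃ s : Rˣ, algebraMap R K s = b.det c ∧ e = s ^ 2 * d := by
  have det_eq : algebraMap R K e = b.det c ^ 2 * algebraMap R K d := by
    simpa [hb, hc] using det_toMatrix_eq_det_sq_mul b c B
  have det_sq : b.det c ^ 2 = algebraMap R K ↑(e * d⁻¹) := by
    rw [Units.val_mul, map_mul, det_eq, mul_assoc, ← map_mul, d.mul_inv, map_one, mul_one]
  obtain ⟨s, hs⟩ := exists_unit_algebraMap_eq_of_pow_eq two_ne_zero det_sq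
  refine ⟨s, hs, Units.ext (IsFractionRing.injective R K ?_)⟩
  simp [det_eq, hs]

theorem exists_basis_det_eq_one_toMatrix_eq [Module R E] [IsScalarTower R K E]
    [IsIntegrallyClosed R] [IsFractionRing R K] {b c : Basis ι K E} {i₀ : ι} {d e : Rˣ}
    (hb : B.toMatrix b = Matrix.diagonal (Pi.mulSingle i₀ (algebraMap R K d)))
    (hc : B.toMatrix c = Matrix.diagonal (Pi.mulSingle i₀ (algebraMap R K e))) :
    ∃ c' : Basis ι K E, span R (Set.range c') = span R (Set.range c) ∧ b.det c' = 1 ∧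
      B.toMatrix c' = B.toMatrix b := by
  obtain ⟨s, hs, rfl⟩ := exists_unit_det_eq_of_toMatrix_eq_diagonal_mulSingle hb hc
  let w : ι → Rˣ := Pi.mulSingle i₀ s⁻¹
  let wK : ι → Kˣ := fun i ↦ Units.map (algebraMap R K) (w i)
  have wK_prod : ∏ i, (wK i : K) = algebraMap R K ↑s⁻¹ := by
    rw [← Units.coe_prod, ← map_prod, Fintype.prod_pi_mulSingle']
    rfl
  refine ⟨c.unitsSMul wK, ?_, ?_, ?_⟩
  · have coe_eq : ⇑(c.unitsSMul wK) = fun i ↦ w i • c i := funext fun i ↦ by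
      simp [wK, Basis.unitsSMul_apply, Units.smul_def]
    rw [coe_eq, span_range_units_smul]
  · rw [det_unitsSMul_eq_prod_mul, wK_prod, ← hs, ← map_mul, s.inv_mul, map_one]
  · ext i j
    rw [toMatrix_unitsSMul_apply, hb, hc]
    rcases eq_or_ne i j with rfl | hij
    · rcases eq_or_ne i i₀ with rfl | hi
      · have s_ne_zero : algebraMap R K s ≠ 0 := (s.isUnit.map _).ne_zero
        simp only [Pi.mulSingle_eq_same, map_inv, Units.val_inv_eq_inv_val, Units.coe_map,
          MonoidHom.coe_coe, Units.val_mul, Units.val_pow_eq_pow_val, map_mul, map_pow,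
          Matrix.diagonal_apply_eq, wK, w]
        field_simp
      · simp [wK, w, hi]
    · simp [hij]

end Rescaling

section SpecialOrthogonal

variable {R K E ι : Type*} [CommRing R] [Field K] [Algebra R K]
  [AddCommGroup E] [Module K E] [Module R E] [IsScalarTower R K E]

theorem map_equiv_eq_of_toMatrix_polarBilin_eq [Fintype ι] [DecidableEq ι] (h2 : (2 : K) ≠ 0)
    (Q : QuadraticForm K E) {b c : Basis ι K E}
    (h : LinearMap.BilinForm.toMatrix c (polarBilin Q) =
      LinearMap.BilinForm.toMatrix b (polarBilin Q)) (x : E) :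
    Q (b.equiv c (Equiv.refl ι) x) = Q x := by
  let g : E →ₗ[K] E := b.equiv c (Equiv.refl ι)
  have comp_eq : LinearMap.BilinForm.comp (polarBilin Q) g g = polarBilin Q :=
    LinearMap.BilinForm.ext_basis b fun i j ↦ by
      have := congrFun₂ h i j
      simpa [g, LinearMap.BilinForm.toMatrix_apply] using this
  have polar_eq : polar Q (g x) (g x) = polar Q x x := LinearMap.congr_fun₂ comp_eq x x
  rw [polar_self, polar_self, nsmul_eq_mul, nsmul_eq_mul] at polar_eq
  exact mul_left_cancel₀ h2 (by exact_mod_cast polar_eq)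

theorem image_equiv_span_range (b c : Basis ι K E) :
    b.equiv c (Equiv.refl ι) '' (span R (Set.range b) : Set E) = span R (Set.range c) := by
  let g : E →ₗ[R] E := (b.equiv c (Equiv.refl ι) : E →ₗ[K] E).restrictScalars R
  have comp_eq : g ∘ b = c := funext fun i ↦ by simp [g]
  calc _ = ((span R (Set.range b)).map g : Set E) := rfl
    _ = span R (Set.range c) := by rw [map_span, ← Set.range_comp, comp_eq]

theorem statement_1_general [IsDomain R] [IsPrincipalIdealRing R] [HenselianLocalRing R]
    [Finite (ResidueField R)] [IsFractionRing R K] (h2 : IsUnit (2 : R))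
    (Q : QuadraticForm K E) (hQ : LinearMap.BilinForm.Nondegenerate (polarBilin Q))
    (L₁ L₂ : Submodule R E) [Submodule.IsLattice K L₁] [Submodule.IsLattice K L₂]
    (hL₁ : LinearMap.BilinForm.dualSubmodule (polarBilin Q) L₁ = L₁)
    (hL₂ : LinearMap.BilinForm.dualSubmodule (polarBilin Q) L₂ = L₂) :
    ∃ g : E ≃ₗ[K] E, (∀ x, Q (g x) = Q x) ∧ LinearMap.det (g : E →ₗ[K] E) = 1 ∧
      g '' (L₁ : Set E) = L₂ := by
  rcases subsingleton_or_nontrivial E with _ | _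
  · refine ⟨LinearEquiv.refl K E, fun _ ↦ rfl, LinearMap.det_id, ?_⟩
    rw [Subsingleton.elim L₁ L₂]
    exact Set.image_id _
  have := finite_of_isLattice L₁
  obtain ⟨n, hn⟩ := Nat.exists_eq_add_one_of_ne_zero (finrank_pos (R := K) (M := E)).ne'
  have symm : LinearMap.BilinForm.IsSymm (polarBilin Q) := ⟨polar_comm Q⟩
  obtain ⟨b, d, rfl, hb⟩ :=
    exists_basis_span_eq_toMatrix_eq_diagonal_mulSingle h2 symm hQ hL₁ hn
  obtain ⟨c, e, rfl, hc⟩ :=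
    exists_basis_span_eq_toMatrix_eq_diagonal_mulSingle h2 symm hQ hL₂ hn
  obtain ⟨c', span_eq, det_eq, gram_eq⟩ := exists_basis_det_eq_one_toMatrix_eq hb hc
  have two_ne : (2 : K) ≠ 0 := map_ofNat (algebraMap R K) 2 ▸ (h2.map (algebraMap R K)).ne_zero
  refine ⟨b.equiv c' (Equiv.refl _),
    map_equiv_eq_of_toMatrix_polarBilin_eq two_ne Q gram_eq, ?_, ?_⟩
  · rw [Basis.det_basis, det_eq]
  · rw [image_equiv_span_range, span_eq]

end SpecialOrthogonal

theorem isUnit_two_padicInt {p : ℕ} [Fact p.Prime] (hp : p ≠ 2) : IsUnit (2 : ℤ_[p]) := by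
  have coprime : p.Coprime 2 := (Nat.coprime_primes Fact.out Nat.prime_two).2 hp
  exact_mod_cast PadicInt.isUnit_iff.2 (PadicInt.norm_natCast_eq_one_iff.2 coprime)

theorem henselianLocalRing_of_isAdicComplete (R : Type*) [CommRing R] [IsLocalRing R]
    [IsAdicComplete (maximalIdeal R) R] : HenselianLocalRing R where
  is_henselian f hf a₀ h₀ h₁ :=
    HenselianRing.is_henselian f hf a₀ h₀ (h₁.map (Ideal.Quotient.mk (maximalIdeal R)))

theorem statement_1 (hp : p ≠ 2)
    (Q : QuadraticForm ℚ_[p] V)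
    (hQ : LinearMap.BilinForm.Nondegenerate (QuadraticMap.polarBilin Q))
    (hn : 3 ≤ Module.finrank ℚ_[p] V)
    (L₁ L₂ : Submodule ℤ_[p] V)
    (hL₁ : IsLattice p L₁) (hL₂ : IsLattice p L₂)
    (hsd₁ : dualLattice p Q L₁ = L₁) (hsd₂ : dualLattice p Q L₂ = L₂) :
    ∃ g : V ≃ₗ[ℚ_[p]] V, (∀ x, Q (g x) = Q x) ∧
      LinearMap.det (g : V →ₗ[ℚ_[p]] V) = 1 ∧
      ⇑g '' (L₁ : Set V) = (L₂ : Set V) := by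
  have := henselianLocalRing_of_isAdicComplete ℤ_[p]
  have : Submodule.IsLattice ℚ_[p] L₁ := ⟨hL₁.1, hL₁.2⟩
  have : Submodule.IsLattice ℚ_[p] L₂ := ⟨hL₂.1, hL₂.2⟩
  exact statement_1_general (isUnit_two_padicInt hp) Q hQ L₁ L₂ hsd₁ hsd₂
end

section
/- Let p be an odd prime and (V, Q) a finite-dimensional nondegenerate quadratic space over ℚ_p containing no self-dual lattice. Let Λ be a vertex lattice of type 2, i.e. pΛ ⊆ Λ^∨ ⊆ Λ and dim_{𝔽_p}(Λ/Λ^∨) = 2. Then every x ∈ Λ with Q(x) ∈ ℤ_p lies in Λ^∨; equivalently, the induced 𝔽_p-quadratic form x mod Λ^∨ ↦ p·Q(x) mod p on the 2-dimensional 𝔽_p-vector space Λ/Λ^∨ is anisotropic. -/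
/-!
Statement 5: Let `p` be an odd prime and `(V, Q)` a finite-dimensional nondegenerate quadratic
space over `ℚ_p` containing no self-dual lattice.  Let `Λ` be a vertex lattice of type 2.  Then
every `x ∈ Λ` with `Q x ∈ ℤ_p` lies in `Λ^∨` (i.e. the induced quadratic form on `Λ/Λ^∨` is
anisotropic).
-/

open QuadraticMap

variable (p : ℕ) [Fact p.Prime]
variable {V : Type*} [AddCommGroup V] [Module ℚ_[p] V] [Module ℤ_[p] V]
  [IsScalarTower ℤ_[p] ℚ_[p] V]

/-- There is a saturated chain (each step a covering in the lattice of `ℤ_p`-submodules) of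
length `k` from `A` to `B`.  For `A ≤ B` this says exactly that the module `B/A` has length `k`
over `ℤ_p`; when `B/A` is killed by `p` this is the statement `dim_{𝔽_p} (B/A) = k`. -/
def chainLength (A B : Submodule ℤ_[p] V) (k : ℕ) : Prop :=
  ∃ f : Fin (k + 1) → Submodule ℤ_[p] V,
    f 0 = A ∧ f (Fin.last k) = B ∧ ∀ i : Fin k, f i.castSucc ⋖ f i.succ

/-!
If `x ∈ Λ ∖ Λ^∨` has `[x, x]` integral, then `L = Λ^∨ + R x` is an integral lattice strictly larger
than `Λ^∨`, and biduality places its dual between `L` and `Λ`. The dual of `L` is not `Λ`, since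
otherwise `x ∈ L ⊆ Λ^∨`. As `Λ / Λ^∨` has length two, no submodule fits strictly between `L` and
`Λ`, so `L` is self-dual.
-/

theorem covBy_of_covBy_of_covBy_of_lt_of_lt {α : Type*} [Lattice α] [IsModularLattice α]
    {a b c x : α} (hab : a ⋖ b) (hbc : b ⋖ c) (hax : a < x) (hxc : x < c) : x ⋖ c := by
  obtain rfl | hxb := eq_or_ne x b
  · exact hbc
  have hbx : ¬ b ≤ x := fun h => (hbc.eq_or_eq h hxc.le).elim hxb hxc.ne
  have hxb' : ¬ x ≤ b := fun h => (hab.eq_or_eq hax.le h).elim hax.ne' hxb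
  have hinf : x ⊓ b = a :=
    (hab.eq_or_eq (le_inf hax.le hab.le) inf_le_right).resolve_right (mt inf_eq_right.mp hbx)
  have hsup : x ⊔ b = c :=
    (hbc.eq_or_eq le_sup_right (sup_le hxc.le hbc.le)).resolve_left (mt sup_eq_right.mp hxb')
  exact hsup ▸ covBy_sup_of_inf_covBy_right (hinf ▸ hab)

section DualSubmodule

variable {R K W : Type*} [CommRing R] [Field K] [Algebra R K] [AddCommGroup W] [Module R W]
  [Module K W] [IsScalarTower R K W] {B : LinearMap.BilinForm K W}

theorem dualSubmodule_antitone :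
    Antitone (B.dualSubmodule : Submodule R W → Submodule R W) :=
  fun _ _ h _ hx y hy => hx y (h hy)

theorem le_dualSubmodule_comm (hB : B.IsSymm) {N₁ N₂ : Submodule R W} :
    N₁ ≤ B.dualSubmodule N₂ ↔ N₂ ≤ B.dualSubmodule N₁ := by
  have hflip : B.flip = B := LinearMap.BilinForm.isSymm_iff_flip.mp hB
  simpa only [hflip] using B.le_flip_dualSubmodule (N₁ := N₁) (N₂ := N₂)

theorem span_singleton_le_dualSubmodule_self {x : W} (hx : B x x ∈ (1 : Submodule R K)) :
    Submodule.span R {x} ≤ B.dualSubmodule (Submodule.span R {x}) := by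
  rw [Submodule.span_singleton_le_iff_mem]
  intro y hy
  obtain ⟨r, rfl⟩ := Submodule.mem_span_singleton.mp hy
  rw [LinearMap.map_smul_of_tower]
  exact Submodule.smul_mem _ r hx

theorem sup_le_dualSubmodule_sup (hB : B.IsSymm) {N₁ N₂ : Submodule R W}
    (h₁ : N₁ ≤ B.dualSubmodule N₁) (h₂ : N₂ ≤ B.dualSubmodule N₂)
    (h₁₂ : N₁ ≤ B.dualSubmodule N₂) : N₁ ⊔ N₂ ≤ B.dualSubmodule (N₁ ⊔ N₂) := by
  have h₁' : N₁ ⊔ N₂ ≤ B.dualSubmodule N₁ := sup_le h₁ ((le_dualSubmodule_comm hB).mp h₁₂)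
  have h₂' : N₁ ⊔ N₂ ≤ B.dualSubmodule N₂ := sup_le h₁₂ h₂
  exact sup_le ((le_dualSubmodule_comm hB).mp h₁') ((le_dualSubmodule_comm hB).mp h₂')

end DualSubmodule

section Lattice

variable {R K W : Type*} [CommRing R] [IsDomain R] [IsPrincipalIdealRing R] [Field K]
  [Algebra R K] [IsFractionRing R K] [AddCommGroup W] [Module R W] [Module K W]
  [IsScalarTower R K W] {B : LinearMap.BilinForm K W}

theorem exists_basis_span_range_eq (Λ : Submodule R W) [Submodule.IsLattice K Λ] :
    ∃ (n : ℕ) (b : Module.Basis (Fin n) K W), Submodule.span R (Set.range b) = Λ := by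
  have : Module.Free R Λ := Submodule.IsLattice.free K Λ
  let b := Module.finBasis R Λ
  have hb : ⇑(b.extendOfIsLattice K) = Λ.subtype ∘ b := by
    ext i
    simp
  refine ⟨_, b.extendOfIsLattice K, ?_⟩
  rw [hb, Set.range_comp, Submodule.span_image, b.span_eq, Submodule.map_top,
    Submodule.range_subtype]

theorem isLattice_dualSubmodule (hB : B.Nondegenerate) (Λ : Submodule R W)
    [Submodule.IsLattice K Λ] : Submodule.IsLattice K (B.dualSubmodule Λ) := by
  obtain ⟨n, b, rfl⟩ := exists_basis_span_range_eq (K := K) Λ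
  rw [B.dualSubmodule_span_of_basis hB b]
  exact ⟨Submodule.fg_span (Set.finite_range _), by
    rw [Submodule.span_span_of_tower, (B.dualBasis hB b).span_eq]⟩

theorem dualSubmodule_dualSubmodule (hB : B.Nondegenerate) (hsymm : B.IsSymm)
    (Λ : Submodule R W) [Submodule.IsLattice K Λ] :
    B.dualSubmodule (B.dualSubmodule Λ) = Λ := by
  obtain ⟨n, b, rfl⟩ := exists_basis_span_range_eq (K := K) Λ
  exact B.dualSubmodule_dualSubmodule_of_basis hB hsymm b

theorem statement_5_general (hB : B.Nondegenerate) (hsymm : B.IsSymm)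
    (hnosd : ¬ ∃ L : Submodule R W, Submodule.IsLattice K L ∧ B.dualSubmodule L = L)
    {Λ M : Submodule R W} [Submodule.IsLattice K Λ]
    (hdualM : B.dualSubmodule Λ ⋖ M) (hMΛ : M ⋖ Λ) {x : W} (hx : x ∈ Λ)
    (hxx : B x x ∈ (1 : Submodule R K)) : x ∈ B.dualSubmodule Λ := by
  by_contra hxdual
  let L := B.dualSubmodule Λ ⊔ Submodule.span R {x}
  have hdualΛ : B.dualSubmodule Λ ≤ Λ := hdualM.le.trans hMΛ.le
  have hspanΛ : Submodule.span R {x} ≤ Λ := (Submodule.span_singleton_le_iff_mem x Λ).mpr hx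
  have hxL : x ∈ L := Submodule.mem_sup_right (Submodule.mem_span_singleton_self x)
  have hdualL : B.dualSubmodule Λ < L :=
    lt_of_le_of_ne le_sup_left fun h => hxdual (h.symm ▸ hxL)
  have hL_integral : L ≤ B.dualSubmodule L := sup_le_dualSubmodule_sup hsymm
    (dualSubmodule_antitone hdualΛ) (span_singleton_le_dualSubmodule_self hxx)
    (dualSubmodule_antitone hspanΛ)
  have hLdual_le : B.dualSubmodule L ≤ Λ :=
    (dualSubmodule_antitone hdualL.le).trans_eq (dualSubmodule_dualSubmodule hB hsymm Λ)
  have hLdual_ne : B.dualSubmodule L ≠ Λ := fun h =>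
    hxdual ((le_dualSubmodule_comm hsymm).mp h.ge hxL)
  have hLΛ : L ⋖ Λ := covBy_of_covBy_of_covBy_of_lt_of_lt hdualM hMΛ hdualL
    (hL_integral.trans_lt (lt_of_le_of_ne hLdual_le hLdual_ne))
  have hL_lattice : Submodule.IsLattice K L :=
    have := isLattice_dualSubmodule hB Λ
    .of_le_of_isLattice_of_fg K hdualL.le
      (Submodule.IsLattice.fg.sup (Submodule.fg_span_singleton x))
  exact hnosd ⟨L, hL_lattice, (hLΛ.eq_or_eq hL_integral hLdual_le).resolve_right hLdual_ne⟩

end Lattice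

theorem polarBilin_isSymm {R M : Type*} [CommRing R] [AddCommGroup M] [Module R M]
    (Q : QuadraticForm R M) : LinearMap.BilinForm.IsSymm (polarBilin Q) :=
  ⟨polar_comm Q⟩

theorem polarBilin_self_mem {R M σ : Type*} [CommRing R] [AddCommGroup M] [Module R M]
    [SetLike σ R] [AddSubmonoidClass σ R] (Q : QuadraticForm R M) {N : σ} {x : M}
    (hx : Q x ∈ N) : polarBilin Q x x ∈ N := by
  rw [polarBilin_apply_apply, polar_self]
  exact nsmul_mem hx 2

theorem isLattice_iff (L : Submodule ℤ_[p] V) :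
    IsLattice p L ↔ Submodule.IsLattice ℚ_[p] L :=
  ⟨fun h => ⟨h.1, h.2⟩, fun h => ⟨h.fg, h.span_eq_top⟩⟩

theorem exists_covBy_covBy_of_chainLength_two {W : Type*} [AddCommGroup W]
    [Module ℤ_[p] W] {L N : Submodule ℤ_[p] W} (h : chainLength p L N 2) :
    ∃ M, L ⋖ M ∧ M ⋖ N := by
  obtain ⟨f, rfl, rfl, hf⟩ := h
  exact ⟨f 1, hf 0, hf 1⟩

theorem statement_5 (hp : p ≠ 2) [FiniteDimensional ℚ_[p] V]
    (Q : QuadraticForm ℚ_[p] V)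
    (hQ : LinearMap.BilinForm.Nondegenerate (QuadraticMap.polarBilin Q))
    (hnosd : ¬ ∃ L : Submodule ℤ_[p] V, IsLattice p L ∧ dualLattice p Q L = L)
    (Λ : Submodule ℤ_[p] V) (hΛ : IsLattice p Λ)
    (hvertex : ∀ x ∈ Λ, (p : ℤ_[p]) • x ∈ dualLattice p Q Λ)
    (hvertex' : dualLattice p Q Λ ≤ Λ)
    (htype : chainLength p (dualLattice p Q Λ) Λ 2) :
    ∀ x ∈ Λ, Q x ∈ (1 : Submodule ℤ_[p] ℚ_[p]) → x ∈ dualLattice p Q Λ := by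
  obtain ⟨M, hdualM, hMΛ⟩ := exists_covBy_covBy_of_chainLength_two p htype
  simp only [isLattice_iff] at hnosd hΛ
  exact fun x hx hQx => statement_5_general hQ (polarBilin_isSymm Q) hnosd hdualM hMΛ hx
    (polarBilin_self_mem Q hQx)
end
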